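/- Let F be holomorphic on an open neighborhood of the closed polydisc {z ∈ ℂ^n : |z_i| ≤ e^{ρ_i}, i = 1,…,n}, with Taylor expansion F(z) = ∑_{α ∈ ℕ^n} c_α z^α at 0. Let q^{(1)},…,q^{(p)} ∈ ℕ^n and let t = (t_1,…,t_p) ∈ ℂ^p satisfy |t_i| < e^{⟨q^{(i)},ρ⟩} for i = 1,…,p. Then the diagonal series d_q(t) = ∑_{l ∈ ℕ^p} c_{l_1 q^{(1)} + … + l_p q^{(p)}} t_1^{l_1} ⋯ t_p^{l_p} converges absolutely and equals the torus integral (1/(2πi)^n) ∫_{Γ_ρ} F(z) · [∏_{i=1}^p z^{q^{(i)}}/(z^{q^{(i)}} − t_i)] · dz_1/z_1 ∧ … ∧ dz_n/z_n. -/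

import Mathlib

open Complex

/-- The normalized torus integral `(1/(2πi)ⁿ) ∫_{Γ} g(z) dz₁ ∧ … ∧ dzₙ` over the real torus
with center `0` and radii `R`. -/
noncomputable def normTorusIntegral {n : ℕ} (R : Fin n → ℝ) (g : (Fin n → ℂ) → ℂ) : ℂ :=
  ((2 * (Real.pi : ℂ) * I) ^ n)⁻¹ * torusIntegral g 0 R

/-!
Expand the kernel `∏ᵢ z^{q⁽ⁱ⁾} / (z^{q⁽ⁱ⁾} - tᵢ)` in a multiple geometric series in `tᵢ / z^{q⁽ⁱ⁾}`,
which converges uniformly on the torus `|zⱼ| = Rⱼ`, and integrate term by term: the `l`-th term is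
`t^l` times the Cauchy integral of the Taylor coefficient with index `∑ᵢ lᵢ q⁽ⁱ⁾`.

The Taylor series is only known to converge near `0`, so Cauchy's coefficient formula on the whole
torus is obtained by dilation: the average of `F (w z) / z^α` over the torus is holomorphic in the
scalar `w` for `|w| < 1`, continuous for `|w| ≤ 1`, and equal to `w^|α| c_α` for small `w`, hence
for `w = 1`.
-/

open Filter MeasureTheory Metric Set Topology

section ParametricIntegral

variable {α E : Type*} [MeasurableSpace α] {μ : Measure α} [NormedAddCommGroup E] [NormedSpace ℂ E]
  {f : ℂ → α → E} {bound : α → ℝ} {U : Set ℂ}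

lemma aestronglyMeasurable_deriv_of_isOpen (hU : IsOpen U)
    (hf_meas : ∀ w ∈ U, AEStronglyMeasurable (f w) μ)
    (hf_diff : ∀ᵐ a ∂μ, DifferentiableOn ℂ (f · a) U) {w : ℂ} (hw : w ∈ U) :
    AEStronglyMeasurable (fun a ↦ deriv (f · a) w) μ := by
  obtain ⟨u, hu_tendsto, hu_mem⟩ :=
    exists_seq_forall_of_frequently (eventually_nhdsWithin_of_eventually_nhds
      (s := {w}ᶜ) (hU.mem_nhds hw)).frequently
  refine aestronglyMeasurable_of_tendsto_ae atTop
    (f := fun n a ↦ (u n - w)⁻¹ • (f (u n) a - f w a))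
    (fun n ↦ ((hf_meas _ (hu_mem n)).sub (hf_meas w hw)).const_smul _) ?_
  filter_upwards [hf_diff] with a ha
  exact (hasDerivAt_iff_tendsto_slope.1
    (ha.differentiableAt (hU.mem_nhds hw)).hasDerivAt).comp hu_tendsto

theorem differentiableOn_integral_of_dominated (hU : IsOpen U)
    (hf_meas : ∀ w ∈ U, AEStronglyMeasurable (f w) μ)
    (hf_diff : ∀ᵐ a ∂μ, DifferentiableOn ℂ (f · a) U)
    (hf_bound : ∀ᵐ a ∂μ, ∀ w ∈ U, ‖f w a‖ ≤ bound a) (bound_integrable : Integrable bound μ) :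
    DifferentiableOn ℂ (fun w ↦ ∫ a, f w a ∂μ) U := by
  intro w₀ hw₀
  obtain ⟨r, hr, hrU⟩ := nhds_basis_closedBall.mem_iff.1 (hU.mem_nhds hw₀)
  have hr2 : 0 < r / 2 := half_pos hr
  have hsub : ∀ w ∈ ball w₀ (r / 2), closedBall w (r / 2) ⊆ U := fun w hw ↦
    (closedBall_subset_closedBall' (by linarith [mem_ball.1 hw])).trans hrU
  -- Cauchy's estimate bounds the derivative on a ball of half the radius.
  refine (hasDerivAt_integral_of_dominated_loc_of_deriv_le (ball_mem_nhds w₀ hr2)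
    (eventually_of_mem (hU.mem_nhds hw₀) hf_meas)
    (bound_integrable.mono' (hf_meas w₀ hw₀) (hf_bound.mono fun a ha ↦ ha w₀ hw₀))
    (F' := fun w a ↦ deriv (f · a) w)
    (aestronglyMeasurable_deriv_of_isOpen hU hf_meas hf_diff hw₀) ?_
    (bound_integrable.div_const (r / 2)) ?_).2.differentiableAt.differentiableWithinAt
  · filter_upwards [hf_diff, hf_bound] with a hd hb w hw
    exact norm_deriv_le_of_forall_mem_sphere_norm_le hr2 (hd.diffContOnCl_ball (hsub w hw))
      fun z hz ↦ hb z (hsub w hw (sphere_subset_closedBall hz))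
  · filter_upwards [hf_diff] with a hd w hw
    exact (hd.differentiableAt
      (hU.mem_nhds (hsub w hw (mem_closedBall_self hr2.le)))).hasDerivAt

theorem diffContOnCl_integral_of_dominated (hU : IsOpen U)
    (hf_meas : ∀ w ∈ closure U, AEStronglyMeasurable (f w) μ)
    (hf_diff : ∀ᵐ a ∂μ, DiffContOnCl ℂ (f · a) U)
    (hf_bound : ∀ᵐ a ∂μ, ∀ w ∈ closure U, ‖f w a‖ ≤ bound a)
    (bound_integrable : Integrable bound μ) :
    DiffContOnCl ℂ (fun w ↦ ∫ a, f w a ∂μ) U where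
  differentiableOn := differentiableOn_integral_of_dominated hU
    (fun w hw ↦ hf_meas w (subset_closure hw)) (hf_diff.mono fun _ h ↦ h.differentiableOn)
    (hf_bound.mono fun _ h w hw ↦ h w (subset_closure hw)) bound_integrable
  continuousOn := continuousOn_of_dominated hf_meas
    (fun w hw ↦ hf_bound.mono fun _ h ↦ h w hw) bound_integrable
    (hf_diff.mono fun _ h ↦ h.continuousOn)

end ParametricIntegral

theorem eqOn_closure_of_diffContOnCl_of_eventuallyEq {E : Type*} [NormedAddCommGroup E]
    [NormedSpace ℂ E] [CompleteSpace E] {f g : ℂ → E} {U : Set ℂ} {w₀ : ℂ} (hU : IsOpen U)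
    (hU_conn : IsPreconnected U) (hf : DiffContOnCl ℂ f U) (hg : DiffContOnCl ℂ g U)
    (hw₀ : w₀ ∈ U) (hfg : f =ᶠ[𝓝 w₀] g) : EqOn f g (closure U) :=
  ((hf.differentiableOn.analyticOnNhd hU).eqOn_of_preconnected_of_eventuallyEq
    (hg.differentiableOn.analyticOnNhd hU) hU_conn hw₀ hfg).of_subset_closure
    hf.continuousOn hg.continuousOn subset_closure subset_rfl

section ProductOfSeries

variable {ι : Type*} [Fintype ι]

theorem summable_norm_and_hasSum_prod_of_summable_norm {κ A : Type*} [NormedCommRing A]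
    [CompleteSpace A] (f : ι → κ → A) (hf : ∀ i, Summable fun k ↦ ‖f i k‖) :
    Summable (fun l : ι → κ ↦ ‖∏ i, f i (l i)‖) ∧
      HasSum (fun l : ι → κ ↦ ∏ i, f i (l i)) (∏ i, ∑' k, f i k) := by
  revert f
  apply Fintype.induction_empty_option (P := fun ι _ ↦ ∀ f : ι → κ → A,
    (∀ i, Summable fun k ↦ ‖f i k‖) → Summable (fun l : ι → κ ↦ ‖∏ i, f i (l i)‖) ∧
      HasSum (fun l : ι → κ ↦ ∏ i, f i (l i)) (∏ i, ∑' k, f i k))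
  · intro ι ι' _ e ih f hf
    let _ := Fintype.ofEquiv ι' e.symm
    obtain ⟨hnorm, hsum⟩ := ih (fun i ↦ f (e i)) fun i ↦ hf (e i)
    let E : (ι → κ) ≃ (ι' → κ) := e.arrowCongr (.refl κ)
    have hE (l : ι → κ) : ∏ i, f (e i) (l i) = ∏ i, f i (E l i) := by
      simp [E, ← e.prod_comp]
    simp only [hE, e.prod_comp fun i ↦ ∑' k, f i k] at hnorm hsum
    exact ⟨E.summable_iff.1 hnorm, E.hasSum_iff.1 hsum⟩
  · intro f _
    exact ⟨.of_finite, by simp⟩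
  · intro ι _ ih f hf
    obtain ⟨hnorm, hsum⟩ := ih (fun i ↦ f (some i)) fun i ↦ hf (some i)
    let E : κ × (ι → κ) ≃ (Option ι → κ) := (Equiv.piOptionEquivProd (β := fun _ ↦ κ)).symm
    have hE (x : κ × (ι → κ)) :
        f none x.1 * ∏ i, f (some i) (x.2 i) = ∏ i, f i (E x i) :=
      (Fintype.prod_option fun i ↦ f i (E x i)).symm
    have hnorm' := (hf none).mul_norm hnorm
    have hsum' := (hf none).of_norm.hasSum.mul hsum hnorm'.of_norm
    simp only [hE] at hnorm' hsum'
    rw [Fintype.prod_option]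
    exact ⟨E.summable_iff.1 hnorm', E.hasSum_iff.1 hsum'⟩

theorem hasSum_prod_geometric {𝕜 : Type*} [NormedField 𝕜] [CompleteSpace 𝕜] {x : ι → 𝕜}
    (hx : ∀ i, ‖x i‖ < 1) :
    HasSum (fun l : ι → ℕ ↦ ∏ i, x i ^ l i) (∏ i, (1 - x i)⁻¹) := by
  simpa only [tsum_geometric_of_norm_lt_one (hx _)] using
    (summable_norm_and_hasSum_prod_of_summable_norm (fun i k ↦ x i ^ k)
      fun i ↦ (summable_norm_geometric_of_norm_lt_one (hx i))).2

end ProductOfSeries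

lemma prod_pow_sum_mul {ι κ M : Type*} [Fintype ι] [Fintype κ] [CommMonoid M] (z : κ → M)
    (q : ι → κ → ℕ) (l : ι → ℕ) :
    ∏ j, z j ^ ∑ i, l i * q i j = ∏ i, (∏ j, z j ^ q i j) ^ l i := by
  simp only [← Finset.prod_pow_eq_pow_sum, ← Finset.prod_pow, ← pow_mul, mul_comm (l _)]
  exact Finset.prod_comm

section Polydisc

variable {n : ℕ} {R : Fin n → ℝ}

/-- The open polydisc in `ℂⁿ` with centre `0` and polyradius `R`. -/
def polydisc (R : Fin n → ℝ) : Set (Fin n → ℂ) := univ.pi fun j ↦ ball 0 (R j)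

/-- The real torus `Γ = {z | ∀ j, |z j| = R j}`, the distinguished boundary of `polydisc R`. -/
def realTorus (R : Fin n → ℝ) : Set (Fin n → ℂ) := univ.pi fun j ↦ sphere 0 (R j)

/-- The mean of `g` over `realTorus R` with respect to normalized Haar measure, the analogue in
several variables of `Real.circleAverage`. -/
noncomputable def torusAverage (R : Fin n → ℝ) (g : (Fin n → ℂ) → ℂ) : ℂ :=
  ((2 * (Real.pi : ℂ)) ^ n)⁻¹ *
    ∫ θ in Icc (0 : Fin n → ℝ) fun _ ↦ 2 * Real.pi, g (torusMap 0 R θ)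

lemma closure_polydisc (hR : ∀ j, 0 < R j) :
    closure (polydisc R) = univ.pi fun j ↦ closedBall 0 (R j) := by
  simp only [polydisc, closure_pi_set, closure_ball _ (hR _).ne']

lemma isCompact_closure_polydisc (hR : ∀ j, 0 < R j) : IsCompact (closure (polydisc R)) := by
  rw [closure_polydisc hR]
  exact isCompact_univ_pi fun j ↦ isCompact_closedBall _ _

lemma smul_mem_polydisc (hR : ∀ j, 0 < R j) {w : ℂ} (hw : w ∈ ball 0 1) {z : Fin n → ℂ}
    (hz : z ∈ realTorus R) : w • z ∈ polydisc R := by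
  intro j _
  have hzj : ‖z j‖ = R j := mem_sphere_zero_iff_norm.1 (hz j trivial)
  rw [mem_ball_zero_iff, Pi.smul_apply, norm_smul, hzj]
  exact mul_lt_of_lt_one_left (hR j) (mem_ball_zero_iff.1 hw)

lemma smul_mem_closure_polydisc (hR : ∀ j, 0 < R j) {w : ℂ} (hw : w ∈ closedBall 0 1)
    {z : Fin n → ℂ} (hz : z ∈ realTorus R) : w • z ∈ closure (polydisc R) := by
  rw [closure_polydisc hR]
  intro j _
  have hzj : ‖z j‖ = R j := mem_sphere_zero_iff_norm.1 (hz j trivial)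
  rw [mem_closedBall_zero_iff, Pi.smul_apply, norm_smul, hzj]
  exact mul_le_of_le_one_left (hR j).le (mem_closedBall_zero_iff.1 hw)

lemma realTorus_subset_closure_polydisc (hR : ∀ j, 0 < R j) :
    realTorus R ⊆ closure (polydisc R) := fun z hz ↦ by
  simpa only [one_smul] using
    smul_mem_closure_polydisc hR (mem_closedBall_zero_iff.2 norm_one.le) hz

lemma norm_eq_of_mem_realTorus {z : Fin n → ℂ} (hz : z ∈ realTorus R) : ‖z‖ = ‖R‖ := by
  have hzj (j : Fin n) : ‖z j‖ = ‖R j‖ := by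
    have h := mem_sphere_zero_iff_norm.1 (hz j trivial)
    rw [h, Real.norm_of_nonneg (h ▸ norm_nonneg _)]
  refine le_antisymm ((pi_norm_le_iff_of_nonneg (norm_nonneg _)).2 fun j ↦ ?_)
    ((pi_norm_le_iff_of_nonneg (norm_nonneg _)).2 fun j ↦ ?_)
  · exact hzj j ▸ norm_le_pi_norm R j
  · exact hzj j ▸ norm_le_pi_norm z j

lemma torusMap_mem_realTorus (hR : ∀ j, 0 < R j) (θ : Fin n → ℝ) :
    torusMap 0 R θ ∈ realTorus R := fun j _ ↦ by
  simp [torusMap, norm_exp_ofReal_mul_I, abs_of_pos (hR j)]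

lemma realTorus_nonempty (hR : ∀ j, 0 < R j) : (realTorus R).Nonempty :=
  ⟨_, torusMap_mem_realTorus hR 0⟩

lemma continuous_torusMap (c : Fin n → ℂ) (R : Fin n → ℝ) : Continuous (torusMap c R) := by
  unfold torusMap
  fun_prop

lemma norm_prod_pow_of_mem_realTorus {z : Fin n → ℂ} (hz : z ∈ realTorus R) (α : Fin n → ℕ) :
    ‖∏ j, z j ^ α j‖ = ∏ j, R j ^ α j := by
  simp only [norm_prod, norm_pow, mem_sphere_zero_iff_norm.1 (hz _ trivial)]

lemma prod_pow_ne_zero_of_mem_realTorus (hR : ∀ j, 0 < R j) {z : Fin n → ℂ}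
    (hz : z ∈ realTorus R) (α : Fin n → ℕ) : ∏ j, z j ^ α j ≠ 0 := by
  rw [← norm_pos_iff, norm_prod_pow_of_mem_realTorus hz]
  exact Finset.prod_pos fun j _ ↦ pow_pos (hR j) _

lemma torusAverage_congr (hR : ∀ j, 0 < R j) {f g : (Fin n → ℂ) → ℂ}
    (hfg : EqOn f g (realTorus R)) : torusAverage R f = torusAverage R g := by
  simp only [torusAverage, hfg (torusMap_mem_realTorus hR _)]

lemma torusAverage_const_mul (a : ℂ) (g : (Fin n → ℂ) → ℂ) :
    torusAverage R (fun z ↦ a * g z) = a * torusAverage R g := by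
  rw [torusAverage, integral_const_mul, mul_left_comm, torusAverage]

lemma normTorusIntegral_div_prod (hR : ∀ j, 0 < R j) (g : (Fin n → ℂ) → ℂ) :
    normTorusIntegral R (fun z ↦ g z / ∏ j, z j) = torusAverage R g := by
  have hjac (θ : Fin n → ℝ) : (∏ j, (R j : ℂ) * exp (θ j * I) * I) •
      (g (torusMap 0 R θ) / ∏ j, torusMap 0 R θ j) = I ^ n * g (torusMap 0 R θ) := by
    have hne : ∏ j, torusMap 0 R θ j ≠ 0 := by
      simpa only [pow_one] using
        prod_pow_ne_zero_of_mem_realTorus hR (torusMap_mem_realTorus hR θ) fun _ ↦ 1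
    have hdet : ∏ j, (R j : ℂ) * exp (θ j * I) * I = (∏ j, torusMap 0 R θ j) * I ^ n := by
      simp [torusMap, Finset.prod_mul_distrib]
    rw [hdet, smul_eq_mul]
    field_simp
  simp only [normTorusIntegral, torusIntegral, torusAverage, hjac]
  rw [integral_const_mul, mul_pow, mul_inv, mul_assoc,
    inv_mul_cancel_left₀ (pow_ne_zero _ I_ne_zero)]

theorem torusAverage_prod (f : Fin n → ℂ → ℂ) :
    torusAverage R (fun z ↦ ∏ j, f j (z j)) = ∏ j, Real.circleAverage (f j) 0 (R j) := by
  have hpi : (volume : Measure (Fin n → ℝ)).restrict (Icc 0 fun _ ↦ 2 * Real.pi) =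
      Measure.pi fun _ ↦ volume.restrict (Icc 0 (2 * Real.pi)) := by
    rw [← Measure.restrict_pi_pi, pi_univ_Icc, volume_pi, Pi.zero_def]
  have hcircle (j : Fin n) : Real.circleAverage (f j) 0 (R j) =
      (2 * (Real.pi : ℂ))⁻¹ * ∫ x in Icc 0 (2 * Real.pi), f j (circleMap 0 (R j) x) := by
    rw [Real.circleAverage_def, intervalIntegral.integral_of_le Real.two_pi_pos.le,
      integral_Icc_eq_integral_Ioc, real_smul]
    push_cast
    rfl
  simp only [hcircle, Finset.prod_mul_distrib, Finset.prod_const, Finset.card_univ,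
    Fintype.card_fin, inv_pow]
  rw [torusAverage, hpi, ← integral_fintype_prod_eq_prod]
  rfl

theorem circleAverage_zpow {r : ℝ} (hr : 0 < r) (k : ℤ) :
    Real.circleAverage (fun z ↦ z ^ k) 0 r = if k = 0 then 1 else 0 := by
  split_ifs with hk
  · simp [hk, Real.circleAverage_const]
  · have hcongr : (∮ z in C(0, r), (z - 0)⁻¹ • z ^ k) = ∮ z in C(0, r), (z - 0) ^ (k - 1) :=
      circleIntegral.integral_congr hr.le fun z hz ↦ by
        have hz0 : z ≠ 0 := ne_of_mem_sphere hz hr.ne'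
        rw [sub_zero, zpow_sub_one₀ hz0, smul_eq_mul, mul_comm]
    rw [Real.circleAverage_eq_circleIntegral hr.ne', hcongr,
      circleIntegral.integral_sub_zpow_of_ne (by lia), smul_zero]

theorem torusAverage_prod_pow_div_prod_pow (hR : ∀ j, 0 < R j) (α β : Fin n → ℕ) :
    torusAverage R (fun z ↦ (∏ j, z j ^ β j) / ∏ j, z j ^ α j) = if β = α then 1 else 0 := by
  have hzpow : EqOn (fun z : Fin n → ℂ ↦ (∏ j, z j ^ β j) / ∏ j, z j ^ α j)
      (fun z ↦ ∏ j, z j ^ (β j - α j : ℤ)) (realTorus R) := fun z hz ↦ by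
    have hz0 (j : Fin n) : z j ≠ 0 := ne_of_mem_sphere (hz j trivial) (hR j).ne'
    simp only [← Finset.prod_div_distrib, zpow_sub₀ (hz0 _), zpow_natCast]
  rw [torusAverage_congr hR hzpow, torusAverage_prod fun j (x : ℂ) ↦ x ^ (β j - α j : ℤ)]
  simp only [circleAverage_zpow (hR _), sub_eq_zero, Nat.cast_inj, funext_iff,
    Fintype.prod_ite_zero, Finset.prod_const_one]

theorem hasSum_torusAverage (hR : ∀ j, 0 < R j) {ι : Type*} [Countable ι]
    {f : ι → (Fin n → ℂ) → ℂ} {g : (Fin n → ℂ) → ℂ} {bound : ι → ℝ}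
    (hf_cont : ∀ i, ContinuousOn (f i) (realTorus R))
    (hf_bound : ∀ i, ∀ z ∈ realTorus R, ‖f i z‖ ≤ bound i) (hbound : Summable bound)
    (hfg : ∀ z ∈ realTorus R, HasSum (f · z) (g z)) :
    HasSum (fun i ↦ torusAverage R (f i)) (torusAverage R g) := by
  have hT := torusMap_mem_realTorus hR
  exact (hasSum_integral_of_dominated_convergence (fun i _ ↦ bound i)
    (fun i ↦ ((hf_cont i).comp_continuous (continuous_torusMap 0 R) hT).aestronglyMeasurable)
    (fun i ↦ .of_forall fun θ ↦ hf_bound i _ (hT θ)) (.of_forall fun _ ↦ hbound)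
    continuous_const.integrableOn_Icc (.of_forall fun θ ↦ hfg _ (hT θ))).mul_left _

theorem diffContOnCl_torusAverage (hR : ∀ j, 0 < R j) {f : ℂ → (Fin n → ℂ) → ℂ} {U : Set ℂ}
    (hU : IsOpen U) {M : ℝ} (hf_cont : ∀ w ∈ closure U, ContinuousOn (f w) (realTorus R))
    (hf_diff : ∀ z ∈ realTorus R, DiffContOnCl ℂ (f · z) U)
    (hf_bound : ∀ z ∈ realTorus R, ∀ w ∈ closure U, ‖f w z‖ ≤ M) :
    DiffContOnCl ℂ (fun w ↦ torusAverage R (f w)) U := by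
  have hT := torusMap_mem_realTorus hR
  exact (diffContOnCl_integral_of_dominated hU
    (fun w hw ↦ ((hf_cont w hw).comp_continuous (continuous_torusMap 0 R) hT).aestronglyMeasurable)
    (.of_forall fun θ ↦ hf_diff _ (hT θ)) (.of_forall fun θ ↦ hf_bound _ (hT θ))
    (continuous_const (y := M)).integrableOn_Icc).const_smul ((2 * (Real.pi : ℂ)) ^ n)⁻¹

theorem torusAverage_div_prod_pow_of_hasSum (hR : ∀ j, 0 < R j) {F : (Fin n → ℂ) → ℂ}
    {c : (Fin n → ℕ) → ℂ}
    (hF : ∀ z ∈ realTorus R, HasSum (fun β : Fin n → ℕ ↦ c β * ∏ j, z j ^ β j) (F z))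
    (α : Fin n → ℕ) : torusAverage R (fun z ↦ F z / ∏ j, z j ^ α j) = c α := by
  obtain ⟨z₀, hz₀⟩ := realTorus_nonempty hR
  have hnorm (β : Fin n → ℕ) (z) (hz : z ∈ realTorus R) :
      ‖c β * ∏ j, z j ^ β j‖ = ‖c β‖ * ∏ j, R j ^ β j := by
    rw [norm_mul, norm_prod_pow_of_mem_realTorus hz]
  have hsummable : Summable fun β : Fin n → ℕ ↦ ‖c β‖ * ∏ j, R j ^ β j := by
    simpa only [hnorm _ z₀ hz₀] using (hF z₀ hz₀).summable.norm
  have hsum := hasSum_torusAverage hR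
    (f := fun β z ↦ (c β * ∏ j, z j ^ β j) / ∏ j, z j ^ α j)
    (fun β ↦ ContinuousOn.div (by fun_prop) (by fun_prop)
      fun z hz ↦ prod_pow_ne_zero_of_mem_realTorus hR hz α)
    (fun β z hz ↦ by rw [norm_div, hnorm β z hz, norm_prod_pow_of_mem_realTorus hz])
    (hsummable.div_const (∏ j, R j ^ α j)) fun z hz ↦ (hF z hz).div_const _
  simp only [mul_div_assoc, torusAverage_const_mul, torusAverage_prod_pow_div_prod_pow hR] at hsum
  simpa using hsum.unique (hasSum_single α fun β hβ ↦ by rw [if_neg hβ, mul_zero])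

lemma diffContOnCl_torusAverage_dilation (hR : ∀ j, 0 < R j) {F : (Fin n → ℂ) → ℂ}
    (hF : DiffContOnCl ℂ F (polydisc R)) (α : Fin n → ℕ) :
    DiffContOnCl ℂ (fun w : ℂ ↦ torusAverage R fun z ↦ F (w • z) / ∏ j, z j ^ α j)
      (ball 0 1) := by
  have hball : closure (ball (0 : ℂ) 1) = closedBall 0 1 := closure_ball 0 one_ne_zero
  obtain ⟨M, hM⟩ := (isCompact_closure_polydisc hR).exists_bound_of_continuousOn hF.continuousOn
  refine diffContOnCl_torusAverage hR isOpen_ball (M := M / ∏ j, R j ^ α j) ?_ ?_ ?_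
  · intro w hw
    rw [hball] at hw
    exact (hF.continuousOn.comp (by fun_prop) fun z hz ↦ smul_mem_closure_polydisc hR hw hz).div
      (by fun_prop) fun z hz ↦ prod_pow_ne_zero_of_mem_realTorus hR hz α
  · intro z hz
    have hdil : DiffContOnCl ℂ (fun w : ℂ ↦ w • z) (ball 0 1) :=
      (differentiable_id.smul_const z).diffContOnCl
    exact (hF.comp hdil fun w hw ↦ smul_mem_polydisc hR hw hz).smul_const (∏ j, z j ^ α j)⁻¹
  · intro z hz w hw
    rw [hball] at hw
    rw [norm_div, norm_prod_pow_of_mem_realTorus hz]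
    gcongr
    · exact Finset.prod_nonneg fun j _ ↦ pow_nonneg (hR j).le _
    · exact hM _ (smul_mem_closure_polydisc hR hw hz)

lemma eventually_forall_realTorus_smul {P : (Fin n → ℂ) → Prop}
    (hP : ∀ᶠ z in 𝓝 0, P z) : ∀ᶠ w : ℂ in 𝓝 0, ∀ z ∈ realTorus R, P (w • z) := by
  obtain ⟨ε, hε, hball⟩ := Metric.eventually_nhds_iff_ball.1 hP
  have hsmall : ∀ᶠ w : ℂ in 𝓝 0, ‖w‖ * ‖R‖ < ε :=
    (by fun_prop : Continuous fun w : ℂ ↦ ‖w‖ * ‖R‖).continuousAt.eventually_lt_const (by simpa)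
  filter_upwards [hsmall] with w hw z hz
  refine hball _ (mem_ball_zero_iff.2 ?_)
  rwa [norm_smul, norm_eq_of_mem_realTorus hz]

theorem torusAverage_div_prod_pow_of_eventually_hasSum (hR : ∀ j, 0 < R j)
    {F : (Fin n → ℂ) → ℂ} (hF : DiffContOnCl ℂ F (polydisc R)) {c : (Fin n → ℕ) → ℂ}
    (hc : ∀ᶠ z in 𝓝 0, HasSum (fun β : Fin n → ℕ ↦ c β * ∏ j, z j ^ β j) (F z))
    (α : Fin n → ℕ) : torusAverage R (fun z ↦ F z / ∏ j, z j ^ α j) = c α := by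
  let G (w : ℂ) : ℂ := torusAverage R fun z ↦ F (w • z) / ∏ j, z j ^ α j
  have hG : DiffContOnCl ℂ G (ball 0 1) := diffContOnCl_torusAverage_dilation hR hF α
  have hG_zero : G =ᶠ[𝓝 0] fun w ↦ w ^ (∑ j, α j) * c α := by
    filter_upwards [eventually_forall_realTorus_smul (R := R) hc] with w hw
    refine torusAverage_div_prod_pow_of_hasSum hR (c := fun β ↦ w ^ (∑ j, β j) * c β)
      (fun z hz ↦ ?_) α
    convert hw z hz using 2 with β
    simp only [Pi.smul_apply, smul_eq_mul, mul_pow, Finset.prod_mul_distrib,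
      Finset.prod_pow_eq_pow_sum]
    ring
  have hG_one := eqOn_closure_of_diffContOnCl_of_eventuallyEq isOpen_ball
    (convex_ball 0 1).isPreconnected hG
    (Differentiable.diffContOnCl (by fun_prop)) (mem_ball_self one_pos) hG_zero
    (show (1 : ℂ) ∈ closure (ball 0 1) by simp [closure_ball])
  simpa [G] using hG_one

theorem hasSum_prod_kernel (hR : ∀ j, 0 < R j) {ι : Type*} [Fintype ι]
    (q : ι → Fin n → ℕ) {t : ι → ℂ} (ht : ∀ i, ‖t i‖ < ∏ j, R j ^ q i j) {z : Fin n → ℂ}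
    (hz : z ∈ realTorus R) :
    HasSum (fun l : ι → ℕ ↦ ∏ i, (t i / ∏ j, z j ^ q i j) ^ l i)
      (∏ i, (∏ j, z j ^ q i j) / ((∏ j, z j ^ q i j) - t i)) := by
  have hratio (i : ι) : ‖t i / ∏ j, z j ^ q i j‖ < 1 := by
    rw [norm_div, norm_prod_pow_of_mem_realTorus hz]
    exact (div_lt_one (Finset.prod_pos fun j _ ↦ pow_pos (hR j) _)).2 (ht i)
  simpa only [one_sub_div (prod_pow_ne_zero_of_mem_realTorus hR hz _), inv_div] using
    hasSum_prod_geometric hratio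

theorem torusAverage_mul_prod_div_pow (hR : ∀ j, 0 < R j) {ι : Type*} [Fintype ι]
    {F : (Fin n → ℂ) → ℂ} (hF : DiffContOnCl ℂ F (polydisc R)) {c : (Fin n → ℕ) → ℂ}
    (hc : ∀ᶠ z in 𝓝 0, HasSum (fun α : Fin n → ℕ ↦ c α * ∏ j, z j ^ α j) (F z))
    (q : ι → Fin n → ℕ) (t : ι → ℂ) (l : ι → ℕ) :
    torusAverage R (fun z ↦ F z * ∏ i, (t i / ∏ j, z j ^ q i j) ^ l i) =
      c (fun j ↦ ∑ i, l i * q i j) * ∏ i, t i ^ l i := by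
  have hterm (z : Fin n → ℂ) : F z * ∏ i, (t i / ∏ j, z j ^ q i j) ^ l i =
      (∏ i, t i ^ l i) * (F z / ∏ j, z j ^ ∑ i, l i * q i j) := by
    simp only [prod_pow_sum_mul, div_pow, Finset.prod_div_distrib]
    ring
  simp only [hterm]
  rw [torusAverage_const_mul, torusAverage_div_prod_pow_of_eventually_hasSum hR hF hc, mul_comm]

theorem diagonal_integral_representation_general {ι : Type*} [Fintype ι] (hR : ∀ j, 0 < R j)
    {F : (Fin n → ℂ) → ℂ} (hF : DiffContOnCl ℂ F (polydisc R)) {c : (Fin n → ℕ) → ℂ}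
    (hc : ∀ᶠ z in 𝓝 0, HasSum (fun α : Fin n → ℕ ↦ c α * ∏ j, z j ^ α j) (F z))
    (q : ι → Fin n → ℕ) {t : ι → ℂ} (ht : ∀ i, ‖t i‖ < ∏ j, R j ^ q i j) :
    Summable (fun l : ι → ℕ ↦ ‖c (fun j ↦ ∑ i, l i * q i j) * ∏ i, t i ^ l i‖) ∧
    HasSum (fun l : ι → ℕ ↦ c (fun j ↦ ∑ i, l i * q i j) * ∏ i, t i ^ l i)
      (normTorusIntegral R fun z ↦
        F z * (∏ i, (∏ j, z j ^ q i j) / ((∏ j, z j ^ q i j) - t i)) / ∏ j, z j) := by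
  obtain ⟨M, hM⟩ := (isCompact_closure_polydisc hR).exists_bound_of_continuousOn hF.continuousOn
  have hF_cont : ContinuousOn F (realTorus R) :=
    hF.continuousOn.mono (realTorus_subset_closure_polydisc hR)
  have hnorm (l : ι → ℕ) (z) (hz : z ∈ realTorus R) :
      ‖∏ i, (t i / ∏ j, z j ^ q i j) ^ l i‖ = ∏ i, (‖t i‖ / ∏ j, R j ^ q i j) ^ l i := by
    rw [norm_prod]
    simp only [norm_pow, norm_div, norm_prod_pow_of_mem_realTorus hz]
  have hgeom : Summable fun l : ι → ℕ ↦ ∏ i, (‖t i‖ / ∏ j, R j ^ q i j) ^ l i := by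
    obtain ⟨z₀, hz₀⟩ := realTorus_nonempty hR
    simpa only [hnorm _ z₀ hz₀] using (hasSum_prod_kernel hR q ht hz₀).summable.norm
  have hsum := hasSum_torusAverage hR
    (f := fun (l : ι → ℕ) z ↦ F z * ∏ i, (t i / ∏ j, z j ^ q i j) ^ l i)
    (fun l ↦ hF_cont.mul <| continuousOn_finsetProd _ fun i _ ↦
      (continuousOn_const.div (by fun_prop)
        fun z hz ↦ prod_pow_ne_zero_of_mem_realTorus hR hz (q i)).pow (l i))
    (fun l z hz ↦ by
      rw [norm_mul, hnorm l z hz]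
      exact mul_le_mul_of_nonneg_right (hM z (realTorus_subset_closure_polydisc hR hz))
        (hnorm l z hz ▸ norm_nonneg _))
    (hgeom.mul_left M) fun z hz ↦ (hasSum_prod_kernel hR q ht hz).mul_left (F z)
  simp only [torusAverage_mul_prod_div_pow hR hF hc] at hsum
  rw [normTorusIntegral_div_prod hR]
  exact ⟨hsum.summable.norm, hsum⟩

end Polydisc

/-- if `F` is holomorphic on a neighborhood of the closed polydisc of radii
`e^{ρᵢ}` with Taylor coefficients `c_α` at `0`, `q⁽¹⁾,…,q⁽ᵖ⁾ ∈ ℕⁿ`, and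
`|tᵢ| < e^{⟨q⁽ⁱ⁾,ρ⟩}`, then the diagonal series
`d_q(t) = ∑_{l ∈ ℕᵖ} c_{l₁q⁽¹⁾+…+l_p q⁽ᵖ⁾} t₁^{l₁} ⋯ t_p^{l_p}` converges absolutely and
equals `(1/(2πi)ⁿ) ∫_{Γ_ρ} F(z) ∏ᵢ [z^{q⁽ⁱ⁾}/(z^{q⁽ⁱ⁾} − tᵢ)] dz₁/z₁ ∧ … ∧ dzₙ/zₙ`. -/
theorem diagonal_integral_representation (n p : ℕ) (ρ : Fin n → ℝ)
    (F : (Fin n → ℂ) → ℂ)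
    (hF : ∃ U : Set (Fin n → ℂ), IsOpen U ∧
      {z : Fin n → ℂ | ∀ i, ‖z i‖ ≤ Real.exp (ρ i)} ⊆ U ∧ DifferentiableOn ℂ F U)
    (c : (Fin n → ℕ) → ℂ)
    (hc : ∃ ε > (0 : ℝ), ∀ z : Fin n → ℂ, (∀ i, ‖z i‖ < ε) →
      HasSum (fun α : Fin n → ℕ => c α * ∏ i, z i ^ α i) (F z))
    (q : Fin p → Fin n → ℕ) (t : Fin p → ℂ)
    (ht : ∀ i, ‖t i‖ < Real.exp (∑ j, (q i j : ℝ) * ρ j)) :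
    Summable (fun l : Fin p → ℕ =>
      ‖c (fun j => ∑ i, l i * q i j) * ∏ i, t i ^ l i‖) ∧
    HasSum (fun l : Fin p → ℕ => c (fun j => ∑ i, l i * q i j) * ∏ i, t i ^ l i)
      (normTorusIntegral (fun i => Real.exp (ρ i))
        (fun z => F z *
          (∏ i, (∏ j, z j ^ (q i j : ℤ)) / ((∏ j, z j ^ (q i j : ℤ)) - t i)) / ∏ j, z j)) := by
  obtain ⟨U, -, hKU, hFU⟩ := hF
  obtain ⟨ε, hε, hc⟩ := hc
  have hR (j : Fin n) : 0 < Real.exp (ρ j) := Real.exp_pos _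
  simpa only [zpow_natCast] using diagonal_integral_representation_general hR
    (DifferentiableOn.diffContOnCl <|
      hFU.mono fun z hz ↦ hKU (by simpa [closure_polydisc hR] using hz))
    (Metric.eventually_nhds_iff.2 ⟨ε, hε, fun z hz ↦ hc z (by simpa [pi_norm_lt_iff hε] using hz)⟩)
    q (by simpa only [Real.exp_sum, Real.exp_nat_mul] using ht)
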